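/- arXiv:2004.13101 — 2 statements merged into one kernel-verified Lean document; each statement's English description precedes it below -/
import Mathlib

section
/- Let q be an odd prime power. The number of N ∈ F_{q³} such that (N^{q²+q+1} − N − N^q − N^{q²})² + 8N^{q²+q+1} − 4(N^{q+1} + N^{q²+1} + N^{q²+q}) is a nonzero square in F_q equals (q³ − q² − q − 3)/2. -/
/-!
Let `σ` generate `Gal(L/K)`, where `L/K` is cubic. The substitution `N = b / (b - 1)` turns the
condition on `N` into `u ^ 2 = λ(b) + 4 Nm(b)` with `u ∈ Kˣ`, where `λ` is the quadratic form
`x² + y² + z² - 2xy - 2yz - 2zx` evaluated at the conjugates of `b`. This cubic surface in `(b, u)`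
has a double point at the origin. Projecting from there, i.e. setting `b = u a`, leaves the equation
`1 = λ(a) + 4 u Nm(a)`, which is linear in `u`; hence the points with `u ≠ 0` correspond to the
`a ≠ 0` with `λ(a) ≠ 1`. Each `b` lies below two such points, `(b, u)` and `(b, -u)`, and `b = 1` is
the only one that comes from no `N`. Finally `λ` is isometric over `K` to the discriminant of binary
quadratic forms, which takes the value `1` exactly `q² + q` times.
-/

open Module

section Polynomials

variable {R F : Type*} [CommRing R] [Field F]

/-- The Källén function, the quadratic form `e₁² - 4 e₂` in three variables. -/
def kallen (x y z : R) : R :=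
  x ^ 2 + y ^ 2 + z ^ 2 - 2 * (x * y + y * z + z * x)

/-- The cubic `λ + 4 e₃`, where `λ` is the Källén function. The surface `u ^ 2 = λ + 4 e₃` is
singular at the origin. -/
def nodalCubic (x y z : R) : R :=
  kallen x y z + 4 * (x * y * z)

/-- The polynomial whose nonzero square values are counted, in the conjugates `x = N`, `y = N ^ q`,
`z = N ^ (q ^ 2)`. -/
def conjDiscrim (x y z : R) : R :=
  (x * y * z - x - y - z) ^ 2 + 8 * (x * y * z) - 4 * (x * y + x * z + y * z)

lemma nodalCubic_mul (c x y z : R) :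
    nodalCubic (c * x) (c * y) (c * z) = c ^ 2 * (kallen x y z + 4 * c * (x * y * z)) := by
  unfold nodalCubic kallen
  ring

lemma conjDiscrim_eq_sq_mul_nodalCubic {x y z : F} (hx : x ≠ 1) (hy : y ≠ 1) (hz : z ≠ 1) :
    conjDiscrim x y z = ((x - 1) * (y - 1) * (z - 1)) ^ 2 *
      nodalCubic (x / (x - 1)) (y / (y - 1)) (z / (z - 1)) := by
  have hx := sub_ne_zero.2 hx
  have hy := sub_ne_zero.2 hy
  have hz := sub_ne_zero.2 hz
  unfold conjDiscrim nodalCubic kallen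
  field_simp
  ring

/-- Up to sign, the value at `x` is scaled by `y - z` times its weight `1 / ((x - y) * (x - z))` in
Lagrange interpolation. -/
lemma kallen_eq_discrim {x y z : F} (hxy : x ≠ y) (hyz : y ≠ z) (hzx : z ≠ x) (a b c : F) :
    kallen ((y - z) / ((x - y) * (z - x)) * (a * x ^ 2 + b * x + c))
      ((z - x) / ((y - z) * (x - y)) * (a * y ^ 2 + b * y + c))
      ((x - y) / ((z - x) * (y - z)) * (a * z ^ 2 + b * z + c)) = discrim a b c := by
  have hxy := sub_ne_zero.2 hxy
  have hyz := sub_ne_zero.2 hyz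
  have hzx := sub_ne_zero.2 hzx
  unfold kallen discrim
  field_simp
  ring

end Polynomials

lemma four_ne_zero_of_ringChar_ne_two {F : Type*} [Field F] (hchar : ringChar F ≠ 2) :
    (4 : F) ≠ 0 := by
  rw [show (4 : F) = 2 ^ 2 by norm_num]
  exact pow_ne_zero 2 (Ring.two_ne_zero hchar)

section Counting

lemma ncard_eq_sum_ncard_preimage_mk {α β : Type*} [Fintype α] [Finite β] (s : Set (α × β)) :
    s.ncard = ∑ a, (Prod.mk a ⁻¹' s).ncard := by
  let e : s ≃ Σ a, Prod.mk a ⁻¹' s :=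
    { toFun := fun p ↦ ⟨p.1.1, p.1.2, p.2⟩
      invFun := fun p ↦ ⟨(p.1, p.2.1), p.2.2⟩
      left_inv := fun _ ↦ rfl
      right_inv := fun _ ↦ rfl }
  simp only [← Nat.card_coe_set_eq, ← Nat.card_sigma, Nat.card_congr e]

variable {K : Type*} [Field K] [Fintype K]

lemma ncard_discrim_eq_of_ne_zero (hchar : ringChar K ≠ 2) {a : K} (ha : a ≠ 0) (d : K) :
    {p : K × K | discrim a p.1 p.2 = d}.ncard = Fintype.card K := by
  have h4a : 4 * a ≠ 0 := mul_ne_zero (four_ne_zero_of_ringChar_ne_two hchar) ha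
  have hfiber (b : K) : Prod.mk b ⁻¹' {p : K × K | discrim a p.1 p.2 = d} =
      {(b ^ 2 - d) / (4 * a)} := by
    ext c
    simp only [Set.mem_preimage, Set.mem_ofPred_eq, Set.mem_singleton_iff, eq_div_iff h4a, discrim]
    grind
  simp [ncard_eq_sum_ncard_preimage_mk, hfiber]

lemma ncard_discrim_zero_eq [DecidableEq K] (hchar : ringChar K ≠ 2) (d : K) :
    ({p : K × K | discrim 0 p.1 p.2 = d}.ncard : ℤ) =
      (quadraticChar K d + 1) * Fintype.card K := by
  have hprod : {p : K × K | discrim 0 p.1 p.2 = d} = {b | b ^ 2 = d} ×ˢ Set.univ := by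
    ext p
    simp [discrim]
  rw [hprod, Set.ncard_prod, Set.ncard_univ, Nat.card_eq_fintype_card, Nat.cast_mul,
    Set.ncard_eq_toFinset_card', quadraticChar_card_sqrts hchar]

lemma ncard_discrim_eq [DecidableEq K] (hchar : ringChar K ≠ 2) (d : K) :
    ({p : K × K × K | discrim p.1 p.2.1 p.2.2 = d}.ncard : ℤ) =
      Fintype.card K ^ 2 + quadraticChar K d * Fintype.card K := by
  have hsum : ∑ a ∈ {(0 : K)}ᶜ, ({p : K × K | discrim a p.1 p.2 = d}.ncard : ℤ) =
      (Fintype.card K - 1) * Fintype.card K := by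
    rw [Finset.sum_congr rfl fun a ha ↦ by
      rw [ncard_discrim_eq_of_ne_zero hchar (by simpa using ha)]]
    simp [Finset.card_compl, Nat.cast_sub Fintype.card_pos]
  rw [ncard_eq_sum_ncard_preimage_mk, Nat.cast_sum, Fintype.sum_eq_add_sum_compl 0]
  simp only [Set.preimage_ofPred_eq, hsum, ncard_discrim_zero_eq hchar]
  ring

end Counting

section NonzeroSquares

variable (K L : Type*) [Field K] [Field L] [Algebra K L]

/-- The nonzero squares of the base field `K`, viewed inside the extension `L`. -/
def nonzeroSquares : Set L :=
  {x | ∃ u : K, u ≠ 0 ∧ algebraMap K L (u ^ 2) = x}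

variable {K L}

lemma sq_mul_mem_nonzeroSquares_iff {c : K} (hc : c ≠ 0) {x : L} :
    algebraMap K L c ^ 2 * x ∈ nonzeroSquares K L ↔ x ∈ nonzeroSquares K L := by
  have hc' : algebraMap K L c ≠ 0 := (map_ne_zero _).2 hc
  constructor
  · rintro ⟨u, hu, h⟩
    refine ⟨u / c, div_ne_zero hu hc, ?_⟩
    rw [div_pow, map_div₀, h, map_pow]
    field_simp
  · rintro ⟨u, hu, rfl⟩
    exact ⟨c * u, mul_ne_zero hc hu, by simp only [map_mul, map_pow, mul_pow]⟩

lemma two_mul_ncard_mem_nonzeroSquares [Finite K] (hchar : ringChar K ≠ 2) {ι : Type*} [Finite ι]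
    (g : ι → L) :
    2 * {i | g i ∈ nonzeroSquares K L}.ncard =
      {p : ι × K | p.2 ≠ 0 ∧ algebraMap K L (p.2 ^ 2) = g p.1}.ncard := by
  classical
  have := Fintype.ofFinite ι
  have hfiber (i : ι) : {u : K | u ≠ 0 ∧ algebraMap K L (u ^ 2) = g i}.ncard =
      if g i ∈ nonzeroSquares K L then 2 else 0 := by
    split_ifs with hi
    · obtain ⟨u, hu, hui⟩ := hi
      have hroots : {v : K | v ≠ 0 ∧ algebraMap K L (v ^ 2) = g i} = {u, -u} := by
        ext v
        simp only [Set.mem_ofPred_eq, ← hui, (algebraMap K L).injective.eq_iff,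
          sq_eq_sq_iff_eq_or_eq_neg, Set.mem_insert_iff, Set.mem_singleton_iff]
        grind
      rw [hroots, Set.ncard_pair]
      exact fun h ↦ hu ((Ring.eq_self_iff_eq_zero_of_char_ne_two hchar).1 h.symm)
    · rw [Set.ncard_eq_zero, Set.eq_empty_iff_forall_notMem]
      exact fun u hu ↦ hi ⟨u, hu⟩
  simp only [ncard_eq_sum_ncard_preimage_mk, Set.preimage_ofPred_eq, hfiber, ← Finset.sum_filter,
    Finset.sum_const, smul_eq_mul, Set.ncard_eq_toFinset_card', Set.toFinset_ofPred, mul_comm]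

end NonzeroSquares

section CubicExtension

variable {K L : Type*} [Field K] [Field L] [Algebra K L]

/-- The value of a function of three variables at the conjugates `a`, `σ a`, `σ (σ a)` of an
element of a cyclic cubic extension with Galois group generated by `σ`. -/
def evalConj (σ : Gal(L/K)) (F : L → L → L → L) (a : L) : L :=
  F a (σ a) (σ (σ a))

lemma evalConj_nodalCubic_algebraMap_mul (σ : Gal(L/K)) (u : K) (a : L) :
    evalConj σ nodalCubic (algebraMap K L u * a) = algebraMap K L u ^ 2 *
      (evalConj σ kallen a + 4 * algebraMap K L u * (a * σ a * σ (σ a))) := by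
  simp only [evalConj, map_mul, AlgEquiv.commutes, nodalCubic_mul]

lemma sq_eq_evalConj_nodalCubic_iff (σ : Gal(L/K)) {u : K} (hu : u ≠ 0) (a : L) :
    algebraMap K L (u ^ 2) = evalConj σ nodalCubic (algebraMap K L u * a) ↔
      algebraMap K L u * (4 * (a * σ a * σ (σ a))) = 1 - evalConj σ kallen a := by
  have hu2 : algebraMap K L u ^ 2 ≠ 0 := pow_ne_zero 2 ((map_ne_zero _).2 hu)
  rw [evalConj_nodalCubic_algebraMap_mul, map_pow, left_eq_mul₀ hu2]
  grind

lemma four_mul_conj_ne_zero (hchar : ringChar K ≠ 2) (σ : Gal(L/K)) {a : L} (ha : a ≠ 0) :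
    4 * (a * σ a * σ (σ a)) ≠ 0 := by
  have h4 : algebraMap K L 4 ≠ 0 := (map_ne_zero _).2 (four_ne_zero_of_ringChar_ne_two hchar)
  rw [map_ofNat] at h4
  simpa using ⟨h4, ha⟩

lemma evalConj_conjDiscrim_one_notMem_nonzeroSquares (σ : Gal(L/K)) :
    evalConj σ conjDiscrim 1 ∉ nonzeroSquares K L := by
  rintro ⟨u, hu, h⟩
  have hzero : evalConj σ conjDiscrim 1 = 0 := by
    norm_num [evalConj, conjDiscrim]
  rw [hzero, map_eq_zero] at h
  exact pow_ne_zero 2 hu h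

lemma evalConj_nodalCubic_one_mem_nonzeroSquares (σ : Gal(L/K)) :
    evalConj σ nodalCubic 1 ∈ nonzeroSquares K L :=
  ⟨1, one_ne_zero, by norm_num [evalConj, nodalCubic, kallen]⟩

variable [IsGalois K L] {σ : Gal(L/K)}

lemma apply_apply_apply_of_finrank_eq_three (hL : finrank K L = 3) (σ : Gal(L/K)) (x : L) :
    σ (σ (σ x)) = x := by
  have : FiniteDimensional K L := .of_finrank_pos (by lia)
  have hpow : σ ^ 3 = 1 := by
    rw [← hL, ← IsGalois.card_aut_eq_finrank, pow_card_eq_one']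
  exact DFunLike.congr_fun hpow x

lemma mem_range_algebraMap_of_apply_eq_self (hL : finrank K L = 3) (hσ : σ ≠ 1) {x : L}
    (hx : σ x = x) : x ∈ Set.range (algebraMap K L) := by
  have : FiniteDimensional K L := .of_finrank_pos (by lia)
  rw [IsGalois.mem_range_algebraMap_iff_fixed]
  intro τ
  have : Fact (Nat.Prime 3) := ⟨Nat.prime_three⟩
  have hτ : τ ∈ Subgroup.zpowers σ :=
    mem_zpowers_of_prime_card ((IsGalois.card_aut_eq_finrank K L).trans hL) hσ
  have hstab : σ ∈ MulAction.stabilizer Gal(L/K) x := hx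
  exact (Subgroup.zpowers_le.2 hstab) hτ

lemma exists_apply_ne_and_surjective_quadratic (hL : finrank K L = 3) (hσ : σ ≠ 1) :
    ∃ θ : L, σ θ ≠ θ ∧ Function.Surjective fun t : K × K × K ↦
      algebraMap K L t.1 * θ ^ 2 + algebraMap K L t.2.1 * θ + algebraMap K L t.2.2 := by
  have : FiniteDimensional K L := .of_finrank_pos (by lia)
  let pb := Field.powerBasisOfFiniteOfSeparable K L
  refine ⟨pb.gen, fun h ↦ hσ ?_, fun a ↦ ?_⟩
  · have hid : (σ : L →ₐ[K] L) = AlgHom.id K L := pb.algHom_ext h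
    exact AlgEquiv.ext fun x ↦ DFunLike.congr_fun hid x
  · obtain ⟨f, hf, rfl⟩ := pb.exists_eq_aeval a
    rw [← pb.finrank, hL] at hf
    refine ⟨(f.coeff 2, f.coeff 1, f.coeff 0), ?_⟩
    simp only [Polynomial.aeval_eq_sum_range' hf, Finset.sum_range_succ, Finset.sum_range_zero,
      Algebra.smul_def]
    ring

lemma exists_algebraMap_mul_eq (hL : finrank K L = 3) (hσ : σ ≠ 1) (hchar : ringChar K ≠ 2)
    {a : L} (ha : a ≠ 0) :
    ∃ u : K, algebraMap K L u * (4 * (a * σ a * σ (σ a))) = 1 - evalConj σ kallen a := by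
  have hnorm := four_mul_conj_ne_zero hchar σ ha
  have hfixed : σ ((1 - evalConj σ kallen a) / (4 * (a * σ a * σ (σ a)))) =
      (1 - evalConj σ kallen a) / (4 * (a * σ a * σ (σ a))) := by
    simp only [evalConj, kallen, map_div₀, map_sub, map_mul, map_add, map_pow, map_one, map_ofNat,
      apply_apply_apply_of_finrank_eq_three hL]
    ring
  obtain ⟨u, hu⟩ := mem_range_algebraMap_of_apply_eq_self hL hσ hfixed
  exact ⟨u, by rw [hu, div_mul_cancel₀ _ hnorm]⟩

lemma bijOn_div_nodalCubic (hL : finrank K L = 3) (hσ : σ ≠ 1) (hchar : ringChar K ≠ 2) :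
    Set.BijOn (fun p : L × K ↦ p.1 / algebraMap K L p.2)
      {p | p.2 ≠ 0 ∧ algebraMap K L (p.2 ^ 2) = evalConj σ nodalCubic p.1}
      {a | a ≠ 0 ∧ evalConj σ kallen a ≠ 1} := by
  have hlinear {b : L} {u : K} (hu : u ≠ 0)
      (h : algebraMap K L (u ^ 2) = evalConj σ nodalCubic b) :=
    (sq_eq_evalConj_nodalCubic_iff σ hu (b / algebraMap K L u)).1
      (by rwa [mul_div_cancel₀ _ ((map_ne_zero _).2 hu)])
  have hne_zero {b : L} {u : K} (hu : u ≠ 0)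
      (h : algebraMap K L (u ^ 2) = evalConj σ nodalCubic b) : b / algebraMap K L u ≠ 0 :=
    fun h0 ↦ by simpa [h0, evalConj, kallen] using hlinear hu h
  refine ⟨?mapsTo, ?injOn, ?surjOn⟩
  case mapsTo =>
    rintro ⟨b, u⟩ ⟨hu, h⟩
    refine ⟨hne_zero hu h, fun h1 ↦ ?_⟩
    have hzero := hlinear hu h
    rw [h1, sub_self, mul_eq_zero, map_eq_zero] at hzero
    exact hzero.elim hu (four_mul_conj_ne_zero hchar σ (hne_zero hu h))
  case injOn =>
    rintro ⟨b, u⟩ ⟨hu, h⟩ ⟨b', u'⟩ ⟨hu', h'⟩ (hbu : b / _ = b' / _)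
    have hnorm := four_mul_conj_ne_zero hchar σ (hne_zero hu h)
    have huu' : u = u' := (algebraMap K L).injective <| mul_right_cancel₀ hnorm <|
      (hlinear hu h).trans (hbu ▸ (hlinear hu' h').symm)
    subst huu'
    rw [div_left_inj' ((map_ne_zero _).2 hu)] at hbu
    rw [hbu]
  case surjOn =>
    rintro a ⟨ha, h1⟩
    obtain ⟨u, h⟩ := exists_algebraMap_mul_eq hL hσ hchar ha
    have hu : u ≠ 0 := by
      rintro rfl
      rw [map_zero, zero_mul, eq_comm, sub_eq_zero] at h
      exact h1 h.symm
    exact ⟨(algebraMap K L u * a, u), ⟨hu, (sq_eq_evalConj_nodalCubic_iff σ hu a).2 h⟩,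
      mul_div_cancel_left₀ a ((map_ne_zero _).2 hu)⟩

lemma evalConj_conjDiscrim_mem_nonzeroSquares_iff (hL : finrank K L = 3) (hσ : σ ≠ 1) {x : L}
    (hx : x ≠ 1) :
    evalConj σ conjDiscrim x ∈ nonzeroSquares K L ↔
      evalConj σ nodalCubic (x / (x - 1)) ∈ nonzeroSquares K L := by
  have hne {y : L} (hy : y ≠ 1) : σ y ≠ 1 := by simpa using hy
  have hfixed : σ ((x - 1) * (σ x - 1) * (σ (σ x) - 1)) = (x - 1) * (σ x - 1) * (σ (σ x) - 1) := by
    simp only [map_mul, map_sub, map_one, apply_apply_apply_of_finrank_eq_three hL]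
    ring
  obtain ⟨c, hc⟩ := mem_range_algebraMap_of_apply_eq_self hL hσ hfixed
  have hc0 : c ≠ 0 := by
    rw [← map_ne_zero (algebraMap K L), hc]
    simp [sub_ne_zero, hx]
  rw [evalConj, conjDiscrim_eq_sq_mul_nodalCubic hx (hne hx) (hne (hne hx)), ← hc,
    sq_mul_mem_nonzeroSquares_iff hc0]
  simp only [evalConj, map_div₀, map_sub, map_one]

lemma bijOn_div_sub_one (hL : finrank K L = 3) (hσ : σ ≠ 1) :
    Set.BijOn (fun x : L ↦ x / (x - 1)) {x | evalConj σ conjDiscrim x ∈ nonzeroSquares K L}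
      ({x | evalConj σ nodalCubic x ∈ nonzeroSquares K L} \ {1}) := by
  have hinvol {x : L} (hx : x ≠ 1) : x / (x - 1) / (x / (x - 1) - 1) = x := by
    have := sub_ne_zero.2 hx
    field_simp
    ring
  have hne {x : L} (hx : x ≠ 1) : x / (x - 1) ≠ 1 := by
    have := sub_ne_zero.2 hx
    field_simp
    grind
  have hne_one {x : L} (hx : evalConj σ conjDiscrim x ∈ nonzeroSquares K L) : x ≠ 1 := fun h ↦
    evalConj_conjDiscrim_one_notMem_nonzeroSquares σ (h ▸ hx)
  refine Set.InvOn.bijOn (f' := fun x ↦ x / (x - 1))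
    ⟨fun x hx ↦ hinvol (hne_one hx), fun x hx ↦ hinvol hx.2⟩ (fun x hx ↦ ?_) (fun x hx ↦ ?_)
  · have hx1 := hne_one hx
    exact ⟨(evalConj_conjDiscrim_mem_nonzeroSquares_iff hL hσ hx1).1 hx, hne hx1⟩
  · have hiff := evalConj_conjDiscrim_mem_nonzeroSquares_iff hL hσ (hne hx.2)
    rw [hinvol hx.2] at hiff
    exact hiff.2 hx.1

end CubicExtension

section FiniteField

variable {K L : Type*} [Field K] [Field L] [Algebra K L] [Finite L] {σ : Gal(L/K)}

lemma exists_bijective_evalConj_kallen (hL : finrank K L = 3) (hσ : σ ≠ 1) :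
    ∃ f : K × K × K → L, Function.Bijective f ∧
      ∀ t, evalConj σ kallen (f t) = algebraMap K L (discrim t.1 t.2.1 t.2.2) := by
  have : Finite K := .of_injective _ (algebraMap K L).injective
  obtain ⟨θ, hθ, hsurj⟩ := exists_apply_ne_and_surjective_quadratic hL hσ
  have hθ₃ := apply_apply_apply_of_finrank_eq_three hL σ θ
  have h₁₂ : σ θ ≠ σ (σ θ) := fun h ↦ hθ (σ.injective h).symm
  have h₂₀ : σ (σ θ) ≠ θ := fun h ↦ hθ (by rw [← h, hθ₃, h])
  have hw : (σ θ - σ (σ θ)) / ((θ - σ θ) * (σ (σ θ) - θ)) ≠ 0 :=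
    div_ne_zero (sub_ne_zero.2 h₁₂) (mul_ne_zero (sub_ne_zero.2 hθ.symm) (sub_ne_zero.2 h₂₀))
  have hcard : Nat.card (K × K × K) = Nat.card L := by
    rw [Module.natCard_eq_pow_finrank (K := K) (V := L), hL, Nat.card_prod, Nat.card_prod]
    ring
  refine ⟨_, ((mul_left_surjective₀ hw).comp hsurj).bijective_of_nat_card_le hcard.le,
    fun t ↦ ?_⟩
  have hkallen := kallen_eq_discrim hθ.symm h₁₂ h₂₀
    (algebraMap K L t.1) (algebraMap K L t.2.1) (algebraMap K L t.2.2)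
  simpa [evalConj, hθ₃, discrim, map_ofNat (algebraMap K L)] using hkallen

lemma ncard_evalConj_kallen_eq [Fintype K] [DecidableEq K] (hL : finrank K L = 3)
    (hσ : σ ≠ 1) (hchar : ringChar K ≠ 2) (d : K) :
    ({a : L | evalConj σ kallen a = algebraMap K L d}.ncard : ℤ) =
      Fintype.card K ^ 2 + quadraticChar K d * Fintype.card K := by
  obtain ⟨f, hf, hkallen⟩ := exists_bijective_evalConj_kallen hL hσ
  rw [← ncard_discrim_eq hchar, ← Set.ncard_preimage_of_injective_subset_range hf.injective
    (by simp [hf.surjective.range_eq])]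
  simp only [Set.preimage_ofPred_eq, hkallen, (algebraMap K L).injective.eq_iff]

lemma ncard_evalConj_conjDiscrim_mem_nonzeroSquares_add_one (hL : finrank K L = 3)
    (hσ : σ ≠ 1) :
    {x : L | evalConj σ conjDiscrim x ∈ nonzeroSquares K L}.ncard + 1 =
      {x : L | evalConj σ nodalCubic x ∈ nonzeroSquares K L}.ncard := by
  rw [(bijOn_div_sub_one hL hσ).ncard_eq]
  exact Set.ncard_sdiff_singleton_add_one (evalConj_nodalCubic_one_mem_nonzeroSquares σ)

lemma ncard_ne_zero_and_evalConj_kallen_ne_one [Fintype K] (hL : finrank K L = 3)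
    (hσ : σ ≠ 1) (hchar : ringChar K ≠ 2) :
    {a : L | a ≠ 0 ∧ evalConj σ kallen a ≠ 1}.ncard + (Fintype.card K ^ 2 + Fintype.card K + 1) =
      Fintype.card K ^ 3 := by
  classical
  have hquadric := ncard_evalConj_kallen_eq hL hσ hchar 1
  simp only [map_one, one_mul] at hquadric
  norm_cast at hquadric
  have hcompl : {a : L | a ≠ 0 ∧ evalConj σ kallen a ≠ 1}ᶜ =
      insert 0 {a | evalConj σ kallen a = 1} := by
    ext a
    simp only [Set.mem_compl_iff, Set.mem_ofPred_eq, Set.mem_insert_iff]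
    tauto
  have hzero : (0 : L) ∉ {a | evalConj σ kallen a = 1} := by
    simp [evalConj, kallen]
  rw [← hquadric, ← Set.ncard_insert_of_notMem hzero, ← hcompl, Set.ncard_add_ncard_compl,
    Module.natCard_eq_pow_finrank (K := K) (V := L), hL, Nat.card_eq_fintype_card]

theorem two_mul_ncard_evalConj_conjDiscrim_mem_nonzeroSquares_add_one [Fintype K]
    (hL : finrank K L = 3) (hσ : σ ≠ 1) (hchar : ringChar K ≠ 2) :
    2 * ({x : L | evalConj σ conjDiscrim x ∈ nonzeroSquares K L}.ncard + 1) +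
      (Fintype.card K ^ 2 + Fintype.card K + 1) = Fintype.card K ^ 3 := by
  rw [ncard_evalConj_conjDiscrim_mem_nonzeroSquares_add_one hL hσ,
    two_mul_ncard_mem_nonzeroSquares hchar, (bijOn_div_nodalCubic hL hσ hchar).ncard_eq,
    ncard_ne_zero_and_evalConj_kallen_ne_one hL hσ hchar]

end FiniteField

lemma evalConj_frobenius_conjDiscrim {K L : Type*} [Field K] [Fintype K] [Field L] [Algebra K L]
    [Algebra.IsAlgebraic K L] (x : L) :
    letI q := Fintype.card K
    evalConj (FiniteField.frobeniusAlgEquivOfAlgebraic K L) conjDiscrim x =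
      (x ^ (q ^ 2 + q + 1) - x - x ^ q - x ^ (q ^ 2)) ^ 2 + 8 * x ^ (q ^ 2 + q + 1) -
        4 * (x ^ (q + 1) + x ^ (q ^ 2 + 1) + x ^ (q ^ 2 + q)) := by
  simp only [evalConj, conjDiscrim, FiniteField.coe_frobeniusAlgEquivOfAlgebraic, ← pow_mul, ← sq]
  ring

/-- For `q` an odd prime power, the number of `N ∈ F_{q³}` such that
`(N^{q²+q+1} − N − N^q − N^{q²})² + 8N^{q²+q+1} − 4(N^{q+1} + N^{q²+1} + N^{q²+q})`
is a nonzero square in `F_q` equals `(q³−q²−q−3)/2`. -/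
theorem stmt8 (p n q : ℕ) [Fact p.Prime] (hn : 0 < n) (hq : q = p ^ n) (hodd : Odd q)
    (K L : Type*) [Field K] [Fintype K] [Field L] [Fintype L] [Algebra K L]
    (hK : Fintype.card K = q) (hL : Fintype.card L = q ^ 3) :
    Nat.card {N : L | ∃ u : K, u ≠ 0 ∧
      algebraMap K L (u ^ 2) =
        (N ^ (q ^ 2 + q + 1) - N - N ^ q - N ^ (q ^ 2)) ^ 2 + 8 * N ^ (q ^ 2 + q + 1) -
          4 * (N ^ (q + 1) + N ^ (q ^ 2 + 1) + N ^ (q ^ 2 + q))} =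
      (q ^ 3 - q ^ 2 - q - 3) / 2 := by
  have hchar : ringChar K ≠ 2 := fun h ↦ by
    have := FiniteField.even_card_iff_char_two.1 h
    grind
  have hfinrank : finrank K L = 3 := by
    have hcard := Module.card_eq_pow_finrank (K := K) (V := L)
    rw [hL, hK] at hcard
    exact (Nat.pow_right_injective (hK ▸ Fintype.one_lt_card (α := K)) hcard).symm
  have hfrob : FiniteField.frobeniusAlgEquivOfAlgebraic K L ≠ 1 := fun h ↦ by
    have := FiniteField.orderOf_frobeniusAlgEquivOfAlgebraic K L
    simp [h, hfinrank] at this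
  have hcount :=
    two_mul_ncard_evalConj_conjDiscrim_mem_nonzeroSquares_add_one hfinrank hfrob hchar
  simp only [evalConj_frobenius_conjDiscrim, hK, nonzeroSquares, Set.mem_ofPred_eq] at hcount
  rw [Nat.card_coe_set_eq]
  omega
end

section
/- Let q = 2^n. The number of N ∈ F_{q³} with N ∉ {0,1}, N^{q²+q+1} + N + N^q + N^{q²} ≠ 0 (automatically satisfied when the trace condition below makes sense), such that Tr_{F_q/F_2}( (N^{q+1}+N^{q²+1}+N^{q²+q})(N+N^q+N^{q²}+N^{q+1}+N^{q²+1}+N^{q²+q}+N^{q²+q+1}+1) / (N^{q²+q+1}+N+N^q+N^{q²})² ) = 0, equals (q³ − q² − q − 2)/2. -/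
/-!
Let `L / K` be the cubic extension, `q = |K|`, and write `e₂` for the second elementary symmetric
function of the conjugates of an element. With `b = norm x + trace x`, the given argument of the
absolute trace is `e₂ (e₂ + b + 1) / b ^ 2 = z ^ 2 + z + e₂ / b ^ 2` for `z = e₂ / b`, so it has the
same trace as `e₂ / b ^ 2`, and that trace vanishes exactly when `w ^ 2 + b w + e₂` has a root in
`K`. We double count the pairs `(x, w)` with `w ^ 2 + b w + e₂ = 0`. A given `x` has one root if
`b = 0`, and otherwise two or none according to the trace. On the other hand
`w (w ^ 2 + b w + e₂) = norm (x + w) - (1 - w ^ 2) norm x`, so `w = 0` leaves the `q ^ 2` elements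
with `trace x⁻¹ = 0`, while for `w ≠ 0` the map `(x, w) ↦ 1 + w / x` is a bijection onto the
`q ^ 3 - (q ^ 2 + q + 1)` elements of norm different from `1`, because `w` is recovered from
`norm y = 1 - w ^ 2`. Finally `x ↦ x + 1` turns `b = 0` into `norm x + e₂ = 0`, that is, `x = 0` or
`trace x⁻¹ = 1`, which has `q ^ 2 + 1` solutions.
-/

open Algebra Module

section Fibers

@[to_additive]
theorem ncard_preimage_singleton_mul_card {G H : Type*} [Group G] [Group H] {f : G →* H}
    (hf : Function.Surjective f) (h : H) : (f ⁻¹' {h}).ncard * Nat.card H = Nat.card G := by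
  rw [← Nat.card_coe_set_eq, Nat.card_congr (MonoidHom.fiberEquivKerOfSurjective hf h),
    ← f.ker.card_mul_index, Subgroup.index_ker, MonoidHom.range_eq_top.2 hf, Subgroup.card_top]

theorem ncard_setOf_prod {α β : Type*} [Fintype α] [Finite β] (R : α → β → Prop) :
    {p : α × β | R p.1 p.2}.ncard = ∑ a, {b | R a b}.ncard := by
  simp only [← Nat.card_coe_set_eq]
  rw [← Nat.card_sigma]
  exact Nat.card_congr (Equiv.subtypeProdEquivSigmaSubtype R)

variable (K : Type*) {L : Type*} [Field K] [Field L] [Finite L] [Algebra K L]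

theorem ncard_trace_eq (c : K) :
    {x : L | trace K L x = c}.ncard = Nat.card K ^ (finrank K L - 1) := by
  have : Finite K := .of_injective _ (algebraMap K L).injective
  refine Nat.eq_of_mul_eq_mul_right (Nat.card_pos (α := K)) ?_
  rw [← pow_succ, Nat.sub_add_cancel finrank_pos, ← natCard_eq_pow_finrank]
  exact ncard_preimage_singleton_add_card (f := (trace K L).toAddMonoidHom)
    (trace_surjective K L) c

theorem ncard_norm_eq {c : K} (hc : c ≠ 0) :
    {x : L | norm K x = c}.ncard = ∑ i ∈ Finset.range (finrank K L), Nat.card K ^ i := by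
  have : Finite K := .of_injective _ (algebraMap K L).injective
  have hunits : {x : L | norm K x = c} =
      Units.val '' (Units.map (norm K (S := L)) ⁻¹' {Units.mk0 c hc}) := by
    ext x
    constructor
    · rintro rfl
      exact ⟨Units.mk0 x (norm_ne_zero_iff.1 hc), Units.ext rfl, rfl⟩
    · rintro ⟨u, hu, rfl⟩
      exact congrArg Units.val hu
  have hfiber := ncard_preimage_singleton_mul_card
    (FiniteField.unitsMap_norm_surjective K L) (Units.mk0 c hc)
  rw [Nat.card_units, Nat.card_units, natCard_eq_pow_finrank (K := K) (V := L)] at hfiber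
  rw [hunits, Set.ncard_image_of_injective _ Units.val_injective,
    Nat.geomSum_eq Finite.one_lt_card]
  exact Nat.eq_div_of_mul_eq_left (Nat.sub_pos_of_lt Finite.one_lt_card).ne' hfiber

end Fibers

section ArtinSchreier

variable (K : Type*) {L : Type*} [Field K] [Field L] [Finite L] [Algebra K L]

theorem pow_card_eq_self_iff_mem_range_algebraMap {x : L} :
    x ^ Nat.card K = x ↔ x ∈ Set.range (algebraMap K L) := by
  have : Finite K := .of_injective _ (algebraMap K L).injective
  have := Fintype.ofFinite K
  rw [IsGalois.mem_range_algebraMap_iff_fixed, Nat.card_eq_fintype_card]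
  refine ⟨fun hx σ ↦ ?_, fun hx ↦ hx (FiniteField.frobeniusAlgEquivOfAlgebraic K L)⟩
  obtain ⟨i, rfl⟩ := (FiniteField.bijective_frobeniusAlgEquivOfAlgebraic_pow K L).2 σ
  rw [AlgEquiv.coe_pow]
  exact Function.iterate_fixed hx i

theorem trace_eq_zero_iff_exists_pow_card_sub {a : L} :
    trace K L a = 0 ↔ ∃ z : L, z ^ Nat.card K - z = a := by
  have : Finite K := .of_injective _ (algebraMap K L).injective
  have := Fintype.ofFinite K
  let φ := FiniteField.frobeniusAlgEquivOfAlgebraic K L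
  let f : L →ₗ[K] L := φ.toLinearMap - LinearMap.id
  have hf (z : L) : f z = z ^ Nat.card K - z := by simp [f, φ]
  have hker : f.ker = (Algebra.linearMap K L).range := by
    ext z
    rw [LinearMap.mem_ker, hf, sub_eq_zero, pow_card_eq_self_iff_mem_range_algebraMap]
    rfl
  have hle : f.range ≤ (trace K L).ker := by
    rintro _ ⟨z, rfl⟩
    rw [LinearMap.mem_ker, LinearMap.sub_apply, map_sub, sub_eq_zero]
    exact trace_eq_of_algEquiv φ z
  have hfinrank : finrank K f.range = finrank K (trace K L).ker := by
    have h₁ := f.finrank_range_add_finrank_ker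
    have h₂ := (trace K L).finrank_range_add_finrank_ker
    rw [hker, LinearMap.finrank_range_of_inj (f := Algebra.linearMap K L)
      (algebraMap K L).injective, finrank_self] at h₁
    rw [LinearMap.range_eq_top.2 (trace_surjective K L), finrank_top, finrank_self] at h₂
    lia
  rw [← LinearMap.mem_ker, ← Submodule.eq_of_le_of_finrank_eq hle hfinrank, LinearMap.mem_range]
  simp only [hf]

end ArtinSchreier

section Quadratic

variable {K : Type*} [Field K]

theorem setOf_quadratic_eq_pair [CharP K 2] {b c w : K} (hw : w ^ 2 + b * w + c = 0) :
    {v : K | v ^ 2 + b * v + c = 0} = {w, w + b} := by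
  ext v
  have hfactor : v ^ 2 + b * v + c = (v - w) * (v - (w + b)) := by
    linear_combination hw + (v * w + v * b - w ^ 2 - w * b) * CharTwo.two_eq_zero (R := K)
  rw [Set.mem_ofPred_eq, hfactor, mul_eq_zero, sub_eq_zero, sub_eq_zero]
  rfl

variable [Finite K] [Algebra (ZMod 2) K]

theorem trace_zmod_two_eq_zero_iff {a : K} :
    trace (ZMod 2) K a = 0 ↔ ∃ z : K, z ^ 2 + z = a := by
  have : CharP K 2 := charP_of_injective_algebraMap' (ZMod 2) 2
  simp_rw [trace_eq_zero_iff_exists_pow_card_sub (ZMod 2), Nat.card_zmod, CharTwo.sub_eq_add]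

theorem exists_quadratic_root_iff {b : K} (hb : b ≠ 0) {c : K} :
    (∃ w, w ^ 2 + b * w + c = 0) ↔ trace (ZMod 2) K (c / b ^ 2) = 0 := by
  have : CharP K 2 := charP_of_injective_algebraMap' (ZMod 2) 2
  rw [trace_zmod_two_eq_zero_iff, (mul_left_surjective₀ hb).exists]
  refine exists_congr fun z ↦ ?_
  rw [eq_div_iff (pow_ne_zero 2 hb), CharTwo.add_eq_zero]
  ring_nf

theorem trace_zmod_two_artinSchreier_shift {b : K} (hb : b ≠ 0) (c : K) :
    trace (ZMod 2) K (c * (c + b + 1) / b ^ 2) = trace (ZMod 2) K (c / b ^ 2) := by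
  have hz : trace (ZMod 2) K ((c / b) ^ 2 + c / b) = 0 :=
    trace_zmod_two_eq_zero_iff.2 ⟨c / b, rfl⟩
  have hsplit : c * (c + b + 1) / b ^ 2 = (c / b) ^ 2 + c / b + c / b ^ 2 := by
    field_simp
  rw [hsplit, map_add, hz, zero_add]

theorem ncard_quadratic_roots [DecidableEq K] (b c : K) :
    {w : K | w ^ 2 + b * w + c = 0}.ncard =
      if b = 0 then 1 else if trace (ZMod 2) K (c / b ^ 2) = 0 then 2 else 0 := by
  have : CharP K 2 := charP_of_injective_algebraMap' (ZMod 2) 2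
  split_ifs with hb htr
  · obtain ⟨w, hw⟩ := surjective_frobenius K 2 c
    rw [frobenius_def] at hw
    have hroot : w ^ 2 + b * w + c = 0 := by
      rw [hb, zero_mul, add_zero, hw, CharTwo.add_self_eq_zero]
    rw [setOf_quadratic_eq_pair hroot, hb, add_zero, Set.pair_eq_singleton, Set.ncard_singleton]
  · obtain ⟨w, hw⟩ := (exists_quadratic_root_iff hb).2 htr
    rw [setOf_quadratic_eq_pair hw, Set.ncard_pair (by simpa using hb)]
  · rw [← exists_quadratic_root_iff hb, not_exists] at htr
    simp only [htr, Set.ofPred_false, Set.ncard_empty]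

end Quadratic

section Cubic

theorem det_add_algebraMap_fin_three {R : Type*} [CommRing R] (A : Matrix (Fin 3) (Fin 3) R)
    (r : R) :
    (A + algebraMap R _ r).det = A.det + r * A.adjugate.trace + r ^ 2 * A.trace + r ^ 3 := by
  simp only [Matrix.det_fin_three, Matrix.trace_fin_three, Matrix.adjugate_fin_three,
    Matrix.add_apply, Matrix.algebraMap_matrix_apply, algebraMap_self, RingHom.id_apply,
    Matrix.of_apply, Matrix.cons_val, Fin.reduceEq, ↓reduceIte, add_zero]
  ring

variable {K L : Type*} [Field K] [Field L] [Algebra K L]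

theorem trace_one_eq_finrank : trace K L 1 = finrank K L := by
  simpa using trace_algebraMap (S := L) (1 : K)

/-- The second elementary symmetric function of the conjugates of an element `x` of a cubic
extension, that is, the linear coefficient of `norm (x + X)`. The formula `norm x * trace x⁻¹`
lands in the base field by construction, and the convention `0⁻¹ = 0` makes it correct at `0`. -/
noncomputable def secondTrace (K : Type*) {L : Type*} [Field K] [Field L] [Algebra K L] (x : L) :
    K :=
  norm K x * trace K L x⁻¹

theorem secondTrace_eq_trace_adjugate {ι : Type*} [Fintype ι] [DecidableEq ι] [Nontrivial ι]
    (b : Basis ι K L) (x : L) : secondTrace K x = (leftMulMatrix b x).adjugate.trace := by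
  obtain rfl | hx := eq_or_ne x 0
  · simp [secondTrace]
  have hadj : (leftMulMatrix b x).adjugate = norm K x • leftMulMatrix b x⁻¹ := by
    calc (leftMulMatrix b x).adjugate
        = (leftMulMatrix b x).adjugate * (leftMulMatrix b x * leftMulMatrix b x⁻¹) := by
          rw [← map_mul, mul_inv_cancel₀ hx, map_one, mul_one]
      _ = norm K x • leftMulMatrix b x⁻¹ := by
          rw [← mul_assoc, Matrix.adjugate_mul, smul_one_mul, norm_eq_matrix_det b]
  rw [hadj, Matrix.trace_smul, smul_eq_mul, ← trace_eq_matrix_trace, secondTrace]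

theorem norm_add_algebraMap (h : finrank K L = 3) (x : L) (w : K) :
    norm K (x + algebraMap K L w) =
      norm K x + w * secondTrace K x + w ^ 2 * trace K L x + w ^ 3 := by
  have : FiniteDimensional K L := .of_finrank_pos (h ▸ three_pos)
  let b : Basis (Fin 3) K L := finBasisOfFinrankEq K L h
  rw [secondTrace_eq_trace_adjugate b, trace_eq_matrix_trace b, norm_eq_matrix_det b,
    norm_eq_matrix_det b, map_add, AlgHom.commutes, det_add_algebraMap_fin_three]

theorem secondTrace_eq_zero_iff [FiniteDimensional K L] {x : L} :
    secondTrace K x = 0 ↔ trace K L x⁻¹ = 0 := by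
  rw [secondTrace, mul_eq_zero, norm_eq_zero_iff, or_iff_right_of_imp]
  rintro rfl
  simp

theorem norm_add_secondTrace_eq_zero_iff [FiniteDimensional K L] {x : L} :
    norm K x + secondTrace K x = 0 ↔ x = 0 ∨ trace K L x⁻¹ = -1 := by
  rw [secondTrace, ← mul_one_add, mul_eq_zero, norm_eq_zero_iff, add_comm, add_eq_zero_iff_eq_neg]

/-- The incidence set of the double count: an element `x` of a cubic extension paired with the
roots in the base field of the quadratic `X ^ 2 + (norm x + trace x) * X + secondTrace x`. -/
def quadraticIncidence (K L : Type*) [Field K] [Field L] [Algebra K L] : Set (L × K) :=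
  {p | p.2 ^ 2 + (norm K p.1 + trace K L p.1) * p.2 + secondTrace K p.1 = 0}

theorem mul_quadratic_eq (h : finrank K L = 3) (x : L) (w : K) :
    w * (w ^ 2 + (norm K x + trace K L x) * w + secondTrace K x) =
      norm K (x + algebraMap K L w) - (1 - w ^ 2) * norm K x := by
  rw [norm_add_algebraMap h]
  ring

theorem mk_mem_quadraticIncidence_iff_norm (h : finrank K L = 3) {x : L} (hx : x ≠ 0) {w : K}
    (hw : w ≠ 0) :
    (x, w) ∈ quadraticIncidence K L ↔ norm K (1 + algebraMap K L w / x) = 1 - w ^ 2 := by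
  have : FiniteDimensional K L := .of_finrank_pos (h ▸ three_pos)
  have hnorm : norm K x ≠ 0 := norm_ne_zero_iff.2 hx
  rw [← mul_left_inj' hnorm, ← map_mul, one_add_div hx, div_mul_cancel₀ _ hx, ← sub_eq_zero,
    ← mul_quadratic_eq h, mul_eq_zero, or_iff_right hw]
  rfl

theorem mk_mem_quadraticIncidence_zero {x : L} :
    (x, 0) ∈ quadraticIncidence K L ↔ secondTrace K x = 0 := by
  simp [quadraticIncidence]

theorem fst_ne_zero_of_mem_quadraticIncidence [FiniteDimensional K L] {p : L × K}
    (hp : p ∈ quadraticIncidence K L) (hw : p.2 ≠ 0) : p.1 ≠ 0 := by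
  intro hx
  simp_all [quadraticIncidence, secondTrace]

end Cubic

section Counting

variable {K L : Type*} [Field K] [Field L] [Algebra K L]

theorem ncard_quadraticIncidence_snd_eq_zero [FiniteDimensional K L] :
    (quadraticIncidence K L ∩ {p | p.2 = 0}).ncard = {x : L | trace K L x = 0}.ncard := by
  have himage : quadraticIncidence K L ∩ {p | p.2 = 0} =
      (·, 0) '' {x : L | trace K L x = 0}⁻¹ := by
    ext ⟨x, w⟩
    constructor
    · rintro ⟨hx, rfl : w = 0⟩
      exact ⟨x, secondTrace_eq_zero_iff.1 (mk_mem_quadraticIncidence_zero.1 hx), rfl⟩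
    · rintro ⟨x, hx, ⟨⟩⟩
      exact ⟨mk_mem_quadraticIncidence_zero.2 (secondTrace_eq_zero_iff.2 hx), rfl⟩
  rw [himage, Set.ncard_image_of_injective _ (Prod.mk_left_injective 0), Set.ncard_inv]

theorem ncard_quadraticIncidence_snd_ne_zero [CharP K 2] [PerfectRing K 2]
    (h : finrank K L = 3) :
    (quadraticIncidence K L \ {p | p.2 = 0}).ncard = {y : L | norm K y = 1}ᶜ.ncard := by
  have : FiniteDimensional K L := .of_finrank_pos (h ▸ three_pos)
  let f (p : L × K) : L := 1 + algebraMap K L p.2 / p.1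
  have hnorm {p : L × K} (hp : p ∈ quadraticIncidence K L \ {p | p.2 = 0}) :
      norm K (f p) = 1 - p.2 ^ 2 :=
    (mk_mem_quadraticIncidence_iff_norm h (fst_ne_zero_of_mem_quadraticIncidence hp.1 hp.2)
      hp.2).1 hp.1
  refine Set.BijOn.ncard_eq (f := f) ⟨fun p hp hf ↦ ?_, fun p hp r hr hpr ↦ ?_, fun y hy ↦ ?_⟩
  · rw [Set.mem_ofPred_eq, hnorm hp, sub_eq_self, sq_eq_zero_iff] at hf
    exact hp.2 hf
  · have hsnd : p.2 = r.2 := by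
      rw [← CharTwo.sq_inj, ← sub_right_inj (a := (1 : K)), ← hnorm hp, ← hnorm hr, hpr]
    have hfst : p.1 = r.1 := by
      have hw : algebraMap K L r.2 ≠ 0 := (map_ne_zero _).2 hr.2
      simpa only [f, hsnd, add_right_inj, div_eq_mul_inv, mul_right_inj' hw, inv_inj] using hpr
    exact Prod.ext hfst hsnd
  · obtain ⟨w, hw⟩ := surjective_frobenius K 2 (1 - norm K y)
    rw [frobenius_def] at hw
    have hw₀ : w ≠ 0 := by
      rintro rfl
      rw [zero_pow two_ne_zero, eq_comm, sub_eq_zero] at hw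
      exact hy hw.symm
    have hy₁ : y - 1 ≠ 0 := sub_ne_zero.2 (by rintro rfl; exact hy (map_one _))
    have hwL : algebraMap K L w ≠ 0 := (map_ne_zero _).2 hw₀
    have hfy : 1 + algebraMap K L w / (algebraMap K L w / (y - 1)) = y := by
      rw [div_div_cancel₀ hwL, add_sub_cancel]
    refine ⟨(algebraMap K L w / (y - 1), w), ⟨?_, hw₀⟩, hfy⟩
    rw [mk_mem_quadraticIncidence_iff_norm h (div_ne_zero hwL hy₁) hw₀, hfy, hw, sub_sub_cancel]

theorem ncard_norm_add_trace_eq_zero [CharP K 2] [Finite L] (h : finrank K L = 3) :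
    {x : L | norm K x + trace K L x = 0}.ncard = {x : L | trace K L x = 1}.ncard + 1 := by
  have hshift (x : L) :
      norm K (x + 1) + trace K L (x + 1) = norm K x + secondTrace K x := by
    have hnorm := norm_add_algebraMap h x (1 : K)
    rw [map_one] at hnorm
    rw [hnorm, map_add, trace_one_eq_finrank, h]
    push_cast
    linear_combination (trace K L x + 2) * CharTwo.two_eq_zero (R := K)
  calc {x : L | norm K x + trace K L x = 0}.ncard
      = {x : L | norm K x + secondTrace K x = 0}.ncard := by
        simp only [← hshift]
        exact (Set.ncard_congr' ((Equiv.addRight (1 : L)).subtypeEquiv fun _ ↦ Iff.rfl)).symm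
    _ = (insert 0 {x : L | trace K L x = 1}⁻¹).ncard := by
        congr 1 with x
        rw [Set.mem_ofPred_eq, norm_add_secondTrace_eq_zero_iff, CharTwo.neg_eq]
        rfl
    _ = {x : L | trace K L x = 1}.ncard + 1 := by
        rw [Set.ncard_insert_of_notMem (by simp), Set.ncard_inv]

theorem ncard_quadraticIncidence [Finite L] [Algebra (ZMod 2) K] :
    (quadraticIncidence K L).ncard = {x : L | norm K x + trace K L x = 0}.ncard +
      2 * {x : L | norm K x + trace K L x ≠ 0 ∧
        trace (ZMod 2) K (secondTrace K x / (norm K x + trace K L x) ^ 2) = 0}.ncard := by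
  classical
  have : Finite K := .of_injective _ (algebraMap K L).injective
  have := Fintype.ofFinite L
  rw [quadraticIncidence, ncard_setOf_prod fun (x : L) (w : K) ↦
    w ^ 2 + (norm K x + trace K L x) * w + secondTrace K x = 0]
  simp_rw [ncard_quadratic_roots, Set.ncard_eq_toFinset_card', Set.toFinset_ofPred]
  simp [Finset.sum_ite, Finset.filter_filter, mul_comm]

theorem two_mul_ncard_trace_secondTrace_div_eq_zero [Finite L] [Algebra (ZMod 2) K]
    (h : finrank K L = 3) :
    2 * {x : L | norm K x + trace K L x ≠ 0 ∧
        trace (ZMod 2) K (secondTrace K x / (norm K x + trace K L x) ^ 2) = 0}.ncard +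
      (Nat.card K ^ 2 + Nat.card K + 2) = Nat.card K ^ 3 := by
  have : Finite K := .of_injective _ (algebraMap K L).injective
  have : CharP K 2 := charP_of_injective_algebraMap' (ZMod 2) 2
  have hx := ncard_quadraticIncidence (K := K) (L := L)
  have hw := Set.ncard_inter_add_ncard_sdiff_eq_ncard (quadraticIncidence K L) {p | p.2 = 0}
  have hone := Set.ncard_add_ncard_compl {y : L | norm K y = 1}
  rw [ncard_norm_add_trace_eq_zero h, ncard_trace_eq, h] at hx
  rw [ncard_quadraticIncidence_snd_eq_zero, ncard_quadraticIncidence_snd_ne_zero h,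
    ncard_trace_eq, h] at hw
  rw [ncard_norm_eq K one_ne_zero, h, natCard_eq_pow_finrank (K := K) (V := L), h] at hone
  simp only [Finset.sum_range_succ, Finset.sum_range_zero, pow_zero, pow_one] at hone
  lia

end Counting

section Conjugates

variable {K L : Type*} [Field K] [Field L] [Finite L] [Algebra K L]

theorem algebraMap_trace_of_finrank_eq_three (h : finrank K L = 3) (x : L) :
    algebraMap K L (trace K L x) = x + x ^ Nat.card K + x ^ Nat.card K ^ 2 := by
  simp [FiniteField.algebraMap_trace_eq_sum_pow, h, Finset.sum_range_succ]

theorem algebraMap_norm_of_finrank_eq_three (h : finrank K L = 3) (x : L) :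
    algebraMap K L (norm K x) = x * x ^ Nat.card K * x ^ Nat.card K ^ 2 := by
  simp [FiniteField.algebraMap_norm_eq_prod_pow, h, Finset.prod_range_succ]

theorem algebraMap_secondTrace_of_finrank_eq_three (h : finrank K L = 3) (x : L) :
    algebraMap K L (secondTrace K x) =
      x * x ^ Nat.card K + x * x ^ Nat.card K ^ 2 + x ^ Nat.card K * x ^ Nat.card K ^ 2 := by
  have : Finite K := .of_injective _ (algebraMap K L).injective
  rw [secondTrace, map_mul, algebraMap_norm_of_finrank_eq_three h,
    algebraMap_trace_of_finrank_eq_three h]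
  obtain rfl | hx := eq_or_ne x 0
  · simp [Nat.card_pos.ne']
  · rw [inv_pow, inv_pow]
    field_simp
    ring

theorem algebraMap_norm_add_trace (h : finrank K L = 3) (x : L) :
    algebraMap K L (norm K x + trace K L x) =
      x ^ (Nat.card K ^ 2 + Nat.card K + 1) + x + x ^ Nat.card K + x ^ Nat.card K ^ 2 := by
  rw [map_add, algebraMap_norm_of_finrank_eq_three h, algebraMap_trace_of_finrank_eq_three h]
  ring

theorem algebraMap_secondTrace_mul_div (h : finrank K L = 3) (x : L) :
    algebraMap K L (secondTrace K x * (secondTrace K x + (norm K x + trace K L x) + 1) /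
        (norm K x + trace K L x) ^ 2) =
      (x ^ (Nat.card K + 1) + x ^ (Nat.card K ^ 2 + 1) + x ^ (Nat.card K ^ 2 + Nat.card K)) *
        (x + x ^ Nat.card K + x ^ Nat.card K ^ 2 + x ^ (Nat.card K + 1) +
          x ^ (Nat.card K ^ 2 + 1) + x ^ (Nat.card K ^ 2 + Nat.card K) +
          x ^ (Nat.card K ^ 2 + Nat.card K + 1) + 1) /
        (x ^ (Nat.card K ^ 2 + Nat.card K + 1) + x + x ^ Nat.card K + x ^ Nat.card K ^ 2) ^ 2 := by
  rw [map_div₀, map_pow, map_mul, map_add, map_add, map_one, algebraMap_norm_add_trace h,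
    algebraMap_secondTrace_of_finrank_eq_three h]
  ring

theorem norm_add_trace_ne_zero_iff [CharP K 2] (h : finrank K L = 3) {x : L} :
    norm K x + trace K L x ≠ 0 ↔ x ≠ 0 ∧ x ≠ 1 ∧
      x ^ (Nat.card K ^ 2 + Nat.card K + 1) + x + x ^ Nat.card K + x ^ Nat.card K ^ 2 ≠ 0 := by
  rw [← algebraMap_norm_add_trace h, map_ne_zero]
  refine ⟨fun hx ↦ ⟨?_, ?_, hx⟩, fun hx ↦ hx.2.2⟩
  · rintro rfl
    simp at hx
  · rintro rfl
    rw [map_one, trace_one_eq_finrank, h] at hx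
    exact hx (by linear_combination 2 * CharTwo.two_eq_zero (R := K))

end Conjugates

/-- For `q = 2^n`, the number of `N ∈ F_{q³}` with `N ∉ {0,1}`,
`N^{q²+q+1} + N + N^q + N^{q²} ≠ 0`, such that the absolute trace of
`(N^{q+1}+N^{q²+1}+N^{q²+q})(N+N^q+N^{q²}+N^{q+1}+N^{q²+1}+N^{q²+q}+N^{q²+q+1}+1)
 / (N^{q²+q+1}+N+N^q+N^{q²})²` (an element of `F_q`) vanishes,
equals `(q³−q²−q−2)/2`. -/
theorem stmt16 (n q : ℕ) (hn : 0 < n) (hq : q = 2 ^ n)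
    (K M : Type*) [Field K] [Fintype K] [Field M] [Fintype M] [Algebra K M]
    [Algebra (ZMod 2) K] (hK : Fintype.card K = q) (hM : Fintype.card M = q ^ 3) :
    Nat.card {N : M | N ≠ 0 ∧ N ≠ 1 ∧
      N ^ (q ^ 2 + q + 1) + N + N ^ q + N ^ (q ^ 2) ≠ 0 ∧
      ∃ a : K, algebraMap K M a =
          (N ^ (q + 1) + N ^ (q ^ 2 + 1) + N ^ (q ^ 2 + q)) *
            (N + N ^ q + N ^ (q ^ 2) + N ^ (q + 1) + N ^ (q ^ 2 + 1) +
              N ^ (q ^ 2 + q) + N ^ (q ^ 2 + q + 1) + 1) /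
            (N ^ (q ^ 2 + q + 1) + N + N ^ q + N ^ (q ^ 2)) ^ 2 ∧
        Algebra.trace (ZMod 2) K a = 0} =
      (q ^ 3 - q ^ 2 - q - 2) / 2 := by
  obtain rfl : Nat.card K = q := Nat.card_eq_fintype_card.trans hK
  have h : finrank K M = 3 := by
    rw [← Nat.card_eq_fintype_card, natCard_eq_pow_finrank (K := K)] at hM
    exact Nat.pow_right_injective Finite.one_lt_card hM
  have : CharP K 2 := charP_of_injective_algebraMap' (ZMod 2) 2
  have hcount := two_mul_ncard_trace_secondTrace_div_eq_zero (K := K) (L := M) h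
  have hshift (N : M) := and_congr_right fun hN : norm K N + trace K M N ≠ 0 ↦
    (trace_zmod_two_artinSchreier_shift hN (secondTrace K N)).congr_left (z := 0)
  simp_rw [← hshift, norm_add_trace_ne_zero_iff h, and_assoc] at hcount
  simp only [← algebraMap_secondTrace_mul_div h, (algebraMap K M).injective.eq_iff, exists_eq_left]
  rw [Nat.card_coe_set_eq]
  lia
end
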